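/- Let M be a labeled MDP, φ an LTLf formula over AP, and A_φ a DFA over alphabet 2^{AP} whose language equals L(φ). Then the maximal probability of satisfying φ on M equals the maximal probability of reaching an accepting state in the product: max_{π ∈ Π} Pr(M^π ⊨ φ) = max_{σ} Pr^σ{ infinite paths of M × A_φ from (s_init, q_init) that visit some state (s,q) with q ∈ F }, where the maximum on the right ranges over all policies σ of M × A_φ. -/

import Mathlib

open scoped ENNReal

namespace LTLfMDP

/-- A labeled Markov decision process (data part): transition probabilities,
enabled actions, initial state and labeling function. -/
structure MDP (S A AP : Type) where
  P : S → A → S → ℝ≥0∞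
  enabled : S → Set A
  init : S
  label : S → Set AP

/-- A finite path from the initial state: the list of action/successor-state
steps taken (the implicit first state is `init`). -/
abbrev FinPath (S A : Type) := List (A × S)

/-- An infinite path from the initial state: at time `i` the action taken and
the successor state reached (the implicit first state is `init`). -/
abbrev InfPath (S A : Type) := ℕ → A × S

/-- A policy maps every finite path to an action. -/
abbrev Policy (S A : Type) := FinPath S A → A

variable {S A AP : Type}

/-- Well-formedness of a labeled MDP: every state has an enabled action and
the transition probabilities of enabled actions sum to one. -/
def MDP.IsWF [Fintype S] (M : MDP S A AP) : Prop :=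
  (∀ s : S, (M.enabled s).Nonempty) ∧
    ∀ (s : S) (a : A), a ∈ M.enabled s → (∑ s' : S, M.P s a s') = 1

/-- The last state of a finite path (`init` for the empty path). -/
def MDP.lastState (M : MDP S A AP) (l : FinPath S A) : S :=
  (l.map Prod.snd).getLastD M.init

/-- The `i`-th state `s_i` along a finite path (`s_0 = init`). -/
def MDP.stateAtF (M : MDP S A AP) (l : FinPath S A) (i : ℕ) : S :=
  M.lastState (l.take i)

/-- A finite path of the MDP: every action is enabled and every transition has
positive probability. -/
def MDP.ValidFin (M : MDP S A AP) (l : FinPath S A) : Prop :=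
  ∀ i (h : i < l.length),
    (l.get ⟨i, h⟩).1 ∈ M.enabled (M.stateAtF l i) ∧
      0 < M.P (M.stateAtF l i) (l.get ⟨i, h⟩).1 (l.get ⟨i, h⟩).2

/-- The `i`-th state `s_i` along an infinite path (`s_0 = init`). -/
def MDP.stateAtI (M : MDP S A AP) (w : InfPath S A) : ℕ → S
  | 0 => M.init
  | i + 1 => (w i).2

/-- An infinite path of the MDP: every action is enabled and every transition
has positive probability. -/
def MDP.ValidInf (M : MDP S A AP) (w : InfPath S A) : Prop :=
  ∀ i : ℕ,
    (w i).1 ∈ M.enabled (M.stateAtI w i) ∧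
      0 < M.P (M.stateAtI w i) (w i).1 (M.stateAtI w (i + 1))

/-- A policy of the MDP chooses an enabled action after every finite path. -/
def MDP.IsPolicy (M : MDP S A AP) (π : Policy S A) : Prop :=
  ∀ l : FinPath S A, π l ∈ M.enabled (M.lastState l)

/-- The finite prefix of length `n` of an infinite path. -/
def takeI (w : InfPath S A) (n : ℕ) : FinPath S A :=
  (List.range n).map w

/-- A finite path is `π`-consistent if each of its actions is the one `π`
assigns to the corresponding proper prefix. -/
def ConsistentFin (π : Policy S A) (l : FinPath S A) : Prop :=
  ∀ i (h : i < l.length), (l.get ⟨i, h⟩).1 = π (l.take i)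

/-- `Paths^π(s_init)`: the set of `π`-consistent infinite paths of the MDP. -/
def MDP.PathsSet (M : MDP S A AP) (π : Policy S A) : Set (InfPath S A) :=
  { w | M.ValidInf w ∧ ∀ i : ℕ, (w i).1 = π (takeI w i) }

/-- The cylinder set of a finite path: all `π`-consistent infinite paths of the
MDP extending it. -/
def MDP.Cyl (M : MDP S A AP) (π : Policy S A) (l : FinPath S A) :
    Set (InfPath S A) :=
  { w | w ∈ M.PathsSet π ∧ takeI w l.length = l }

/-- The σ-algebra generated by the cylinder sets of (valid, `π`-consistent)
finite paths. -/
def MDP.cylSigma (M : MDP S A AP) (π : Policy S A) :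
    MeasurableSpace (InfPath S A) :=
  MeasurableSpace.generateFrom
    { C | ∃ l : FinPath S A, M.ValidFin l ∧ ConsistentFin π l ∧ C = M.Cyl π l }

/-- The product of the transition probabilities along a finite path starting
in a given state. -/
noncomputable def MDP.weightFrom (M : MDP S A AP) : S → List (A × S) → ℝ≥0∞
  | _, [] => 1
  | s, (a, s') :: rest => M.P s a s' * M.weightFrom s' rest

/-- `∏_{0 ≤ i < n} P(s_i, a_i, s_{i+1})` for a finite path from `init`. -/
noncomputable def MDP.pathWeight (M : MDP S A AP) (l : FinPath S A) : ℝ≥0∞ :=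
  M.weightFrom M.init l

/-- `μ` is the probability measure `Pr^π` induced by the policy `π`: it assigns
to the cylinder set of every valid `π`-consistent finite path the product of
the transition probabilities along that path. -/
def IsCylMeasure (M : MDP S A AP) (π : Policy S A)
    (μ : @MeasureTheory.Measure (InfPath S A) (M.cylSigma π)) : Prop :=
  ∀ l : FinPath S A, M.ValidFin l → ConsistentFin π l →
    μ (M.Cyl π l) = M.pathWeight l

/-- `{w ∈ Paths^π(s_init) : pre(w) ∩ Paths_fin,φ ≠ ∅}`: the `π`-consistent
infinite paths having some finite prefix in the given set of finite paths. -/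
def MDP.SatFinSet (M : MDP S A AP) (π : Policy S A)
    (Pfin : Set (FinPath S A)) : Set (InfPath S A) :=
  { w | w ∈ M.PathsSet π ∧ ∃ l ∈ Pfin, takeI w l.length = l }

/-- Syntax of LTL / LTLf formulas over atomic propositions `α`. -/
inductive LTL (α : Type) : Type
  | tru : LTL α
  | atom : α → LTL α
  | neg : LTL α → LTL α
  | conj : LTL α → LTL α → LTL α
  | next : LTL α → LTL α
  | untl : LTL α → LTL α → LTL α

variable {α : Type}

/-- Infinite-trace (LTL) satisfaction `σ, i ⊨ φ`. -/
def LTL.SatI (σ : ℕ → Set α) : ℕ → LTL α → Prop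
  | _, .tru => True
  | i, .atom p => p ∈ σ i
  | i, .neg φ => ¬ LTL.SatI σ i φ
  | i, .conj φ ψ => LTL.SatI σ i φ ∧ LTL.SatI σ i ψ
  | i, .next φ => LTL.SatI σ (i + 1) φ
  | i, .untl φ ψ =>
      ∃ j : ℕ, i ≤ j ∧ LTL.SatI σ j ψ ∧ ∀ k : ℕ, i ≤ k → k < j → LTL.SatI σ k φ

/-- Infinite-trace (LTL) satisfaction `σ ⊨ φ`. -/
def LTL.Sat (σ : ℕ → Set α) (φ : LTL α) : Prop := LTL.SatI σ 0 φ

/-- `G φ` abbreviates `¬(⊤ U ¬φ)`. -/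
def LTL.G (φ : LTL α) : LTL α := .neg (.untl .tru (.neg φ))

/-- Finite-trace (LTLf) satisfaction `ρ, i ⊨ φ` (positions outside the trace
carry the empty letter, which is never consulted from a position inside a
nonempty trace). -/
def LTL.SatFI (ρ : List (Set α)) : ℕ → LTL α → Prop
  | _, .tru => True
  | i, .atom p => p ∈ ρ.getD i ∅
  | i, .neg φ => ¬ LTL.SatFI ρ i φ
  | i, .conj φ ψ => LTL.SatFI ρ i φ ∧ LTL.SatFI ρ i ψ
  | i, .next φ => i + 1 < ρ.length ∧ LTL.SatFI ρ (i + 1) φ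
  | i, .untl φ ψ =>
      ∃ j : ℕ, i ≤ j ∧ j < ρ.length ∧ LTL.SatFI ρ j ψ ∧
        ∀ k : ℕ, i ≤ k → k < j → LTL.SatFI ρ k φ

/-- Finite-trace (LTLf) satisfaction `ρ ⊨ φ`. -/
def LTL.SatF (ρ : List (Set α)) (φ : LTL α) : Prop := LTL.SatFI ρ 0 φ

/-- The translation `t` from LTLf formulas over `α` to LTL formulas over
`Option α`, where the fresh proposition `alive` is `none`. -/
def LTL.trans : LTL α → LTL (Option α)
  | .tru => .tru
  | .atom p => .conj (.atom (some p)) (.atom none)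
  | .neg φ => .neg φ.trans
  | .conj φ ψ => .conj φ.trans ψ.trans
  | .next φ => .next (.conj (.atom none) φ.trans)
  | .untl φ ψ => .untl φ.trans (.conj (.atom none) ψ.trans)

/-- `g(φ) = t(φ) ∧ (alive U (G ¬alive))`. -/
def LTL.gtrans (φ : LTL α) : LTL (Option α) :=
  .conj φ.trans (.untl (.atom none) (LTL.G (.neg (.atom none))))

/-- The lift of a finite trace over `2^AP` to an infinite trace over
`2^(AP ∪ {alive})`: the `i`-th letter is `ρ_i ∪ {alive}` for `i < |ρ|`
and `∅` afterwards. -/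
def liftTrace (ρ : List (Set α)) : ℕ → Set (Option α) := fun i =>
  if i < ρ.length then insert none (Option.some '' ρ.getD i ∅) else ∅

/-- `{w ∈ Paths^π(s_init) : w ⊨ φ}` for an LTLf formula `φ`: some finite
prefix of `w` has labeling `L(s_0)…L(s_k)` in `L(φ)`. -/
def MDP.SatPhiSet (M : MDP S A AP) (π : Policy S A) (φ : LTL AP) :
    Set (InfPath S A) :=
  { w | w ∈ M.PathsSet π ∧ ∃ k : ℕ,
      LTL.SatF ((List.range (k + 1)).map fun i => M.label (M.stateAtI w i)) φ }

/-- `{w ∈ Paths^π(s_init) : L(w) ⊨ ψ}` for an LTL formula `ψ`: the labeling of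
the infinite path `w` satisfies `ψ` under infinite-trace semantics. -/
def MDP.SatLTLSet {S A AP' : Type} (M : MDP S A AP') (π : Policy S A)
    (ψ : LTL AP') : Set (InfPath S A) :=
  { w | w ∈ M.PathsSet π ∧ LTL.Sat (fun i => M.label (M.stateAtI w i)) ψ }

/-- The product MDP `M × A` of an MDP and a DFA over the alphabet `Set AP`. -/
noncomputable def MDP.prod {Q : Type} [DecidableEq Q] (M : MDP S A AP)
    (D : DFA (Set AP) Q) : MDP (S × Q) A AP where
  P x a y := if y.2 = D.step x.2 (M.label y.1) then M.P x.1 a y.1 else 0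
  enabled x := M.enabled x.1
  init := (M.init, D.step D.start (M.label M.init))
  label x := M.label x.1

/-- Projection of a finite path of the product MDP onto a finite path of the
original MDP. -/
def projFin {Q : Type} : FinPath (S × Q) A → FinPath S A :=
  List.map fun p => (p.1, p.2.1)

/-- The DFA state reached after reading the labeling `L(s_0)…L(s_n)` of a
finite path from the initial DFA state. -/
def MDP.dfaState {Q : Type} (M : MDP S A AP) (D : DFA (Set AP) Q)
    (l : FinPath S A) : Q :=
  D.eval ((List.range (l.length + 1)).map fun i => M.label (M.stateAtF l i))

section Helpers

theorem lastState_snoc (M : MDP S A AP) (l : FinPath S A) (x : A × S) :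
    M.lastState (l ++ [x]) = x.2 := by
  simp [MDP.lastState]

theorem stateAtF_snoc_lt (M : MDP S A AP) (l : FinPath S A) (x : A × S) (i : ℕ)
    (h : i ≤ l.length) : M.stateAtF (l ++ [x]) i = M.stateAtF l i := by
  simp [MDP.stateAtF, List.take_append_of_le_length h]

theorem forall_snoc_iff {β : Type} (l : List β) (x : β) (R : List β → β → Prop) :
    (∀ i (h : i < (l ++ [x]).length), R ((l ++ [x]).take i) ((l ++ [x]).get ⟨i, h⟩)) ↔
      (∀ i (h : i < l.length), R (l.take i) (l.get ⟨i, h⟩)) ∧ R l x := by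
  constructor
  · intro H
    refine ⟨fun i h => ?_, ?_⟩
    · have := H i (by simp; omega)
      rw [List.take_append_of_le_length h.le] at this
      simpa [List.getElem_append_left h] using this
    · have := H l.length (by simp)
      simpa using this
  · rintro ⟨H1, H2⟩ i h
    by_cases hi : i < l.length
    · have := H1 i hi
      rw [List.take_append_of_le_length hi.le]
      simpa [List.getElem_append_left hi] using this
    · have : i = l.length := by simp at h; omega
      subst this
      simpa using H2

theorem valid_snoc (M : MDP S A AP) (l : FinPath S A) (x : A × S) :
    M.ValidFin (l ++ [x]) ↔ M.ValidFin l ∧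
      x.1 ∈ M.enabled (M.lastState l) ∧ 0 < M.P (M.lastState l) x.1 x.2 :=
  forall_snoc_iff l x (fun p y => y.1 ∈ M.enabled (M.lastState p) ∧
    0 < M.P (M.lastState p) y.1 y.2)

theorem consistent_snoc (π : Policy S A) (l : FinPath S A) (x : A × S) :
    ConsistentFin π (l ++ [x]) ↔ ConsistentFin π l ∧ x.1 = π l :=
  forall_snoc_iff l x (fun p y => y.1 = π p)

theorem valid_nil (M : MDP S A AP) : M.ValidFin [] := by
  intro i h; simp at h

theorem consistent_nil (π : Policy S A) : ConsistentFin π [] := by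
  intro i h; simp at h

theorem weightFrom_snoc (M : MDP S A AP) (l : FinPath S A) (x : A × S) (s : S) :
    M.weightFrom s (l ++ [x]) =
      M.weightFrom s l * M.P ((l.map Prod.snd).getLastD s) x.1 x.2 := by
  induction l generalizing s with
  | nil => simp [MDP.weightFrom]
  | cons y l ih =>
    obtain ⟨a, t⟩ := y
    simp only [List.cons_append, MDP.weightFrom, ih, mul_assoc]
    rw [List.map_cons, List.getLastD_cons]

theorem pathWeight_snoc (M : MDP S A AP) (l : FinPath S A) (x : A × S) :
    M.pathWeight (l ++ [x]) = M.pathWeight l * M.P (M.lastState l) x.1 x.2 :=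
  weightFrom_snoc M l x M.init

theorem takeI_succ (w : InfPath S A) (n : ℕ) : takeI w (n + 1) = takeI w n ++ [w n] := by
  simp [takeI, List.range_succ]

theorem takeI_length (w : InfPath S A) (n : ℕ) : (takeI w n).length = n := by
  simp [takeI]

theorem take_takeI (w : InfPath S A) (i n : ℕ) (h : i ≤ n) :
    (takeI w n).take i = takeI w i := by
  simp [takeI, ← List.map_take, List.take_range, h]

theorem lastState_takeI (M : MDP S A AP) (w : InfPath S A) (i : ℕ) :
    M.lastState (takeI w i) = M.stateAtI w i := by
  cases i with
  | zero => rfl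
  | succ n => rw [takeI_succ, lastState_snoc]; rfl

theorem good_takeI (M : MDP S A AP) (π : Policy S A) (w : InfPath S A)
    (hw : w ∈ M.PathsSet π) (n : ℕ) :
    M.ValidFin (takeI w n) ∧ ConsistentFin π (takeI w n) := by
  induction n with
  | zero => exact ⟨valid_nil M, consistent_nil π⟩
  | succ n ih =>
    rw [takeI_succ, valid_snoc, consistent_snoc, lastState_takeI]
    exact ⟨⟨ih.1, hw.1 n⟩, ih.2, hw.2 n⟩

/-- Minimal valid consistent finite paths in `B`. -/
def Good (M : MDP S A AP) (π : Policy S A) (B : Set (FinPath S A)) : Set (FinPath S A) :=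
  { l | M.ValidFin l ∧ ConsistentFin π l ∧ l ∈ B ∧ ∀ i < l.length, l.take i ∉ B }

theorem hit_measure [Countable S] [Countable A] (M : MDP S A AP) (π : Policy S A)
    (μ : @MeasureTheory.Measure (InfPath S A) (M.cylSigma π)) (hμ : IsCylMeasure M π μ)
    (B : Set (FinPath S A)) :
    μ {w | w ∈ M.PathsSet π ∧ ∃ k, takeI w k ∈ B} =
      ∑' l : Good M π B, M.pathWeight l := by
  classical
  letI := M.cylSigma π
  have hset : {w | w ∈ M.PathsSet π ∧ ∃ k, takeI w k ∈ B} =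
      ⋃ l : Good M π B, M.Cyl π l := by
    ext w
    simp only [Set.mem_setOf_eq, Set.mem_iUnion]
    constructor
    · rintro ⟨hw, hk⟩
      have hg := good_takeI M π w hw (Nat.find hk)
      refine ⟨⟨takeI w (Nat.find hk), hg.1, hg.2, Nat.find_spec hk, ?_⟩, hw, ?_⟩
      · intro i hi
        rw [takeI_length] at hi
        rw [take_takeI w i _ hi.le]
        exact Nat.find_min hk hi
      · simp only [takeI_length]
    · rintro ⟨⟨l, hl⟩, hw, h⟩
      exact ⟨hw, l.length, by rw [h]; exact hl.2.2.1⟩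
  rw [hset, MeasureTheory.measure_iUnion]
  · exact tsum_congr fun l => hμ l l.2.1 l.2.2.1
  · have key : ∀ (l l' : Good M π B) (w : InfPath S A), w ∈ M.Cyl π l → w ∈ M.Cyl π l' →
        ¬ (l : FinPath S A).length < (l' : FinPath S A).length := by
      intro l l' w h h' hlt
      apply l'.2.2.2.2 _ hlt
      rw [← h'.2, take_takeI w _ _ hlt.le, h.2]
      exact l.2.2.2.1
    intro l l' hne
    refine Set.disjoint_left.2 fun w h h' => hne ?_
    have e : (l : FinPath S A).length = (l' : FinPath S A).length := by
      have := key l l' w h h'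
      have := key l' l w h' h
      omega
    apply Subtype.ext
    rw [← h.2, ← h'.2, e]
  · intro l
    exact MeasurableSpace.measurableSet_generateFrom ⟨l, l.2.1, l.2.2.1, rfl⟩

variable {Q : Type} [DecidableEq Q]

/-- The lift of a finite path to the product. -/
noncomputable def liftFin (M : MDP S A AP) (D : DFA (Set AP) Q) (l : FinPath S A) :
    FinPath (S × Q) A :=
  l.foldl (fun acc x =>
    acc ++ [(x.1, (x.2, D.step ((M.prod D).lastState acc).2 (M.label x.2)))]) []

theorem lift_nil (M : MDP S A AP) (D : DFA (Set AP) Q) : liftFin M D [] = [] := rfl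

theorem lift_snoc (M : MDP S A AP) (D : DFA (Set AP) Q) (l : FinPath S A) (x : A × S) :
    liftFin M D (l ++ [x]) = liftFin M D l ++
      [(x.1, (x.2, D.step ((M.prod D).lastState (liftFin M D l)).2 (M.label x.2)))] := by
  simp [liftFin]

theorem proj_lift (M : MDP S A AP) (D : DFA (Set AP) Q) (l : FinPath S A) :
    projFin (liftFin M D l) = l := by
  induction l using List.reverseRecOn with
  | nil => rfl
  | append_singleton l x ih =>
    rw [lift_snoc]
    simp only [projFin, List.map_append] at ih ⊢
    rw [ih]; rfl

theorem length_lift (M : MDP S A AP) (D : DFA (Set AP) Q) (l : FinPath S A) :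
    (liftFin M D l).length = l.length := by
  conv_rhs => rw [← proj_lift M D l]
  simp [projFin]

theorem take_lift (M : MDP S A AP) (D : DFA (Set AP) Q) (l : FinPath S A) (i : ℕ) :
    (liftFin M D l).take i = liftFin M D (l.take i) := by
  induction l using List.reverseRecOn with
  | nil => simp [lift_nil]
  | append_singleton l x ih =>
    by_cases h : i ≤ l.length
    · rw [lift_snoc, List.take_append_of_le_length (by rw [length_lift]; exact h), ih,
        List.take_append_of_le_length h]
    · rw [List.take_of_length_le (by rw [length_lift]; simp; omega),
        List.take_of_length_le (by simp; omega)]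

theorem last_lift (M : MDP S A AP) (D : DFA (Set AP) Q) (l : FinPath S A) :
    ((M.prod D).lastState (liftFin M D l)).1 = M.lastState l := by
  induction l using List.reverseRecOn with
  | nil => rfl
  | append_singleton l x ih => rw [lift_snoc, lastState_snoc, lastState_snoc]

theorem last_proj (M : MDP S A AP) (D : DFA (Set AP) Q) (l : FinPath (S × Q) A) :
    ((M.prod D).lastState l).1 = M.lastState (projFin l) := by
  induction l using List.reverseRecOn with
  | nil => rfl
  | append_singleton l x ih =>
    have : projFin (l ++ [x]) = projFin l ++ [(x.1, x.2.1)] := by simp [projFin]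
    rw [this, lastState_snoc, lastState_snoc]

theorem valid_lift (M : MDP S A AP) (D : DFA (Set AP) Q) (l : FinPath S A) :
    (M.prod D).ValidFin (liftFin M D l) ↔ M.ValidFin l := by
  induction l using List.reverseRecOn with
  | nil => exact iff_of_true (valid_nil _) (valid_nil _)
  | append_singleton l x ih =>
    rw [lift_snoc, valid_snoc, valid_snoc, ih]
    simp [MDP.prod, ← last_lift M D l]

theorem weight_lift (M : MDP S A AP) (D : DFA (Set AP) Q) (l : FinPath S A) :
    (M.prod D).pathWeight (liftFin M D l) = M.pathWeight l := by
  induction l using List.reverseRecOn with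
  | nil => rfl
  | append_singleton l x ih =>
    rw [lift_snoc, pathWeight_snoc, pathWeight_snoc, ih]
    simp [MDP.prod, ← last_lift M D l]

theorem consistent_lift (M : MDP S A AP) (D : DFA (Set AP) Q) (π : Policy S A)
    (σp : Policy (S × Q) A) (h : ∀ l, σp (liftFin M D l) = π l) (l : FinPath S A) :
    ConsistentFin σp (liftFin M D l) ↔ ConsistentFin π l := by
  induction l using List.reverseRecOn with
  | nil => exact iff_of_true (consistent_nil _) (consistent_nil _)
  | append_singleton l x ih =>
    rw [lift_snoc, consistent_snoc, consistent_snoc, ih, h]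

theorem lift_proj (M : MDP S A AP) (D : DFA (Set AP) Q) (l : FinPath (S × Q) A)
    (hl : (M.prod D).ValidFin l) : liftFin M D (projFin l) = l := by
  induction l using List.reverseRecOn with
  | nil => rfl
  | append_singleton l x ih =>
    rw [valid_snoc] at hl
    obtain ⟨h1, -, h3⟩ := hl
    have : projFin (l ++ [x]) = projFin l ++ [(x.1, x.2.1)] := by simp [projFin]
    rw [this, lift_snoc, ih h1]
    have h4 : x.2.2 = D.step ((M.prod D).lastState l).2 (M.label x.2.1) := by
      by_contra hne
      simp only [MDP.prod] at h3 hne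
      rw [if_neg hne] at h3
      exact lt_irrefl _ h3
    simp only [← h4]

theorem eval_lift (M : MDP S A AP) (D : DFA (Set AP) Q) (w : InfPath S A) (k : ℕ) :
    ((M.prod D).lastState (liftFin M D (takeI w k))).2 =
      D.eval ((List.range (k + 1)).map fun i => M.label (M.stateAtI w i)) := by
  induction k with
  | zero => rfl
  | succ k ih =>
    rw [takeI_succ, lift_snoc, lastState_snoc, ih, List.range_succ (n := k + 1),
      List.map_append]
    simp only [List.map_cons, List.map_nil, DFA.eval_append_singleton]
    rfl

theorem measure_eq [Countable S] [Countable A] [Countable Q]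
    (M : MDP S A AP) (φ : LTL AP) (D : DFA (Set AP) Q)
    (hD : ∀ ρ : List (Set AP), ρ ∈ D.accepts ↔ LTL.SatF ρ φ)
    (π : Policy S A) (σp : Policy (S × Q) A) (h : ∀ l, σp (liftFin M D l) = π l)
    (μ : @MeasureTheory.Measure (InfPath S A) (M.cylSigma π)) (hμ : IsCylMeasure M π μ)
    (ν : @MeasureTheory.Measure (InfPath (S × Q) A) ((M.prod D).cylSigma σp))
    (hν : IsCylMeasure (M.prod D) σp ν) :
    μ (M.SatPhiSet π φ) = ν { w | w ∈ (M.prod D).PathsSet σp ∧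
          ∃ i : ℕ, ((M.prod D).stateAtI w i).2 ∈ D.accept } := by
  have e1 : M.SatPhiSet π φ = {w | w ∈ M.PathsSet π ∧ ∃ k, takeI w k ∈
      {l | ((M.prod D).lastState (liftFin M D l)).2 ∈ D.accept}} := by
    ext w
    simp only [MDP.SatPhiSet, Set.mem_setOf_eq, eval_lift, ← hD]
    rfl
  have e2 : { w | w ∈ (M.prod D).PathsSet σp ∧
      ∃ i : ℕ, ((M.prod D).stateAtI w i).2 ∈ D.accept } =
      {w | w ∈ (M.prod D).PathsSet σp ∧ ∃ k, takeI w k ∈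
        {l | ((M.prod D).lastState l).2 ∈ D.accept}} := by
    ext w
    simp only [Set.mem_setOf_eq, lastState_takeI]
  rw [e1, e2, hit_measure M π μ hμ, hit_measure (M.prod D) σp ν hν]
  have good : ∀ l, liftFin M D l ∈ Good (M.prod D) σp
        {l | ((M.prod D).lastState l).2 ∈ D.accept} ↔
      l ∈ Good M π {l | ((M.prod D).lastState (liftFin M D l)).2 ∈ D.accept} := by
    intro l
    simp only [Good, Set.mem_setOf_eq, valid_lift, consistent_lift M D π σp h, length_lift,
      take_lift]
  let e : Good M π {l | ((M.prod D).lastState (liftFin M D l)).2 ∈ D.accept} ≃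
      Good (M.prod D) σp {l | ((M.prod D).lastState l).2 ∈ D.accept} :=
    { toFun := fun l => ⟨liftFin M D l, (good l).2 l.2⟩
      invFun := fun l => ⟨projFin (l : FinPath (S × Q) A), (good _).1 (by rw [lift_proj M D _ l.2.1]; exact l.2)⟩
      left_inv := fun l => Subtype.ext (proj_lift M D l)
      right_inv := fun l => Subtype.ext (lift_proj M D l l.2.1) }
  rw [← e.tsum_eq]
  exact tsum_congr fun l => (weight_lift M D l).symm

end Helpers

/-- if the language of the DFA `A_φ` equals `L(φ)`, then the
maximal probability of satisfying the LTLf formula `φ` on `M` equals the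
maximal probability of reaching an accepting state in the product `M × A_φ`. -/
theorem max_prob_ltlf_eq_max_reach_prob_prod
    {S A AP Q : Type} [Fintype S] [Fintype A] [Fintype AP] [Fintype Q]
    [DecidableEq Q]
    (M : MDP S A AP) (hM : M.IsWF) (φ : LTL AP) (D : DFA (Set AP) Q)
    (hD : ∀ ρ : List (Set AP), ρ ∈ D.accepts ↔ LTL.SatF ρ φ)
    (μf : ∀ π : Policy S A,
      @MeasureTheory.Measure (InfPath S A) (M.cylSigma π))
    (hμf : ∀ π : Policy S A, M.IsPolicy π → IsCylMeasure M π (μf π))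
    (μg : ∀ σp : Policy (S × Q) A,
      @MeasureTheory.Measure (InfPath (S × Q) A) ((M.prod D).cylSigma σp))
    (hμg : ∀ σp : Policy (S × Q) A,
      (M.prod D).IsPolicy σp → IsCylMeasure (M.prod D) σp (μg σp)) :
    (⨆ (π : Policy S A) (_ : M.IsPolicy π), μf π (M.SatPhiSet π φ)) =
      ⨆ (σp : Policy (S × Q) A) (_ : (M.prod D).IsPolicy σp),
        μg σp { w | w ∈ (M.prod D).PathsSet σp ∧
          ∃ i : ℕ, ((M.prod D).stateAtI w i).2 ∈ D.accept } := by
  apply le_antisymm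
  · refine iSup₂_le fun π hπ => ?_
    have hσ : (M.prod D).IsPolicy (fun l => π (projFin l)) := by
      intro l
      show π (projFin l) ∈ M.enabled ((M.prod D).lastState l).1
      rw [last_proj]
      exact hπ _
    rw [measure_eq M φ D hD π (fun l => π (projFin l)) (fun l => by rw [proj_lift]) _ (hμf π hπ)
      _ (hμg _ hσ)]
    exact le_iSup₂_of_le _ hσ le_rfl
  · refine iSup₂_le fun σp hσ => ?_
    have hπ : M.IsPolicy (fun l => σp (liftFin M D l)) := by
      intro l
      have := hσ (liftFin M D l)
      change _ ∈ M.enabled ((M.prod D).lastState (liftFin M D l)).1 at this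
      rw [last_lift] at this
      exact this
    rw [← measure_eq M φ D hD (fun l => σp (liftFin M D l)) σp (fun l => rfl) _ (hμf _ hπ)
      _ (hμg _ hσ)]
    exact le_iSup₂_of_le _ hπ le_rfl

end LTLfMDP
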